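/- arXiv:2505.10301 — 3 statements merged into one kernel-verified Lean document; each statement's English description precedes it below -/
import Mathlib

section
/- Let r ≥ 1 be an integer. If there exists t ∈ F = ℚ(v) with t² = (v^{2r} − v^{−2r})/(v² − v^{−2}), then r = 1 and t = 1 or t = −1. Equivalently, the element v^{2(r−1)} + v^{2(r−3)} + ⋯ + v^{−2(r−1)} of F is a square in F if and only if r = 1. (This is the field-theoretic core of Proposition 3.6 and Proposition 5.2 of the paper.) -/
/-!
Up to the square `(v / v ^ r) ^ 2`, the element in question is the polynomial
`(v ^ (4 * r) - 1) / (v ^ 4 - 1)`. A polynomial that is a square of a rational function is the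
square of a polynomial, because `K[X]` is integrally closed. But this polynomial divides the
separable polynomial `X ^ (4 * r) - 1`, so it is squarefree, and a squarefree square is a unit.
Comparing degrees gives `r = 1`.
-/

open scoped BigOperators

noncomputable section

namespace Stmt3

/-- The field `F = ℚ(v)` of rational functions. -/
abbrev F : Type := RatFunc ℚ

/-- The element `v` of `F`. -/
noncomputable def v : F := RatFunc.X

section QuantumInteger

variable {L : Type*} [Field L]

/-- The balanced quantum integer `[r]_q = q^(r-1) + q^(r-3) + ⋯ + q^(1-r)`, evaluated at an element
`q` of a field. Its exponents are integers, so it has the intended meaning only for `q ≠ 0`. -/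
def quantumInt (q : L) (r : ℕ) : L :=
  ∑ k ∈ Finset.range r, q ^ ((r : ℤ) - 1 - 2 * (k : ℤ))

theorem quantumInt_one (q : L) : quantumInt q 1 = 1 := by
  simp [quantumInt]

theorem quantumInt_sq (q : L) (r : ℕ) :
    quantumInt (q ^ 2) r = ∑ k ∈ Finset.range r, q ^ (2 * ((r : ℤ) - 1) - 4 * (k : ℤ)) := by
  refine Finset.sum_congr rfl fun k _ => ?_
  rw [← zpow_natCast, ← zpow_mul]
  congr 1
  push_cast
  ring

theorem quantumInt_mul_sub_inv {q : L} (hq : q ≠ 0) (r : ℕ) :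
    quantumInt q r * (q - q⁻¹) = q ^ (r : ℤ) - q ^ (-(r : ℤ)) := by
  have telescope (k : ℕ) : q ^ ((r : ℤ) - 1 - 2 * (k : ℤ)) * (q - q⁻¹) =
      q ^ ((r : ℤ) - 2 * (k : ℤ)) - q ^ ((r : ℤ) - 2 * ((k + 1 : ℕ) : ℤ)) := by
    rw [mul_sub, ← zpow_add_one₀ hq, ← zpow_sub_one₀ hq]
    congr 2
    · ring
    · push_cast
      ring
  rw [quantumInt, Finset.sum_mul, Finset.sum_congr rfl fun k _ => telescope k,
    Finset.sum_range_sub' fun k : ℕ => q ^ ((r : ℤ) - 2 * (k : ℤ))]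
  congr 2
  ring

theorem quantumInt_eq_div {q : L} (hq : q ≠ 0) (hq2 : q ^ 2 ≠ 1) (r : ℕ) :
    quantumInt q r = (q ^ (r : ℤ) - q ^ (-(r : ℤ))) / (q - q⁻¹) := by
  have hne : q - q⁻¹ ≠ 0 := by
    rwa [sub_ne_zero, Ne, ← mul_eq_one_iff_eq_inv₀ hq, ← sq]
  exact eq_div_of_mul_eq hne (quantumInt_mul_sub_inv hq r)

theorem quantumInt_sq_eq_div {q : L} (hq : q ≠ 0) (hq4 : q ^ 4 ≠ 1) (r : ℕ) :
    quantumInt (q ^ 2) r =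
      (q ^ (2 * (r : ℤ)) - q ^ (-(2 * (r : ℤ)))) / (q ^ (2 : ℤ) - q ^ (-2 : ℤ)) := by
  have hq22 : (q ^ 2) ^ 2 ≠ 1 := by rwa [← pow_mul]
  simpa only [zpow_neg, zpow_mul, zpow_ofNat] using quantumInt_eq_div (pow_ne_zero 2 hq) hq22 r

theorem pow_mul_quantumInt {q : L} (hq : q ≠ 0) (r : ℕ) :
    q ^ r * quantumInt q r = q * ∑ i ∈ Finset.range r, (q ^ 2) ^ i := by
  rw [← Finset.sum_range_reflect, quantumInt, Finset.mul_sum, Finset.mul_sum]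
  refine Finset.sum_congr rfl fun k hk => ?_
  have hexp : (r : ℤ) + ((r : ℤ) - 1 - 2 * (k : ℤ)) = ((2 * (r - 1 - k) + 1 : ℕ) : ℤ) := by
    have := Finset.mem_range.mp hk
    omega
  rw [← pow_mul, ← pow_succ', ← zpow_natCast q r, ← zpow_add₀ hq, hexp, zpow_natCast]

theorem isSquare_geom_sum_of_isSquare_quantumInt_sq {q : L} (hq : q ≠ 0) {r : ℕ}
    (h : IsSquare (quantumInt (q ^ 2) r)) : IsSquare (∑ i ∈ Finset.range r, (q ^ 4) ^ i) := by
  have heq : ∑ i ∈ Finset.range r, (q ^ 4) ^ i = (q ^ r / q) ^ 2 * quantumInt (q ^ 2) r := by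
    have hmul := pow_mul_quantumInt (pow_ne_zero 2 hq) r
    rw [← pow_mul q 2 2] at hmul
    rw [div_pow, div_mul_eq_mul_div, eq_div_iff (pow_ne_zero 2 hq), pow_right_comm, hmul, mul_comm]
  exact heq ▸ (IsSquare.sq _).mul h

end QuantumInteger

theorem isSquare_algebraMap_iff {R L : Type*} [CommRing R] [IsIntegrallyClosed R] [CommRing L]
    [Algebra R L] [IsFractionRing R L] {a : R} : IsSquare (algebraMap R L a) ↔ IsSquare a := by
  refine ⟨fun ⟨t, ht⟩ => ?_, fun h => h.map (algebraMap R L)⟩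
  have hint : IsIntegral R (t ^ 2) := by
    rw [sq, ← ht]
    exact isIntegral_algebraMap
  obtain ⟨b, rfl⟩ := IsIntegrallyClosed.exists_algebraMap_eq_of_isIntegral_pow two_pos hint
  exact ⟨b, IsFractionRing.injective R L (by rw [ht, map_mul])⟩

theorem isUnit_of_squarefree_of_isSquare {M : Type*} [CommMonoid M] {a : M} (ha : Squarefree a)
    (hsq : IsSquare a) : IsUnit a := by
  obtain ⟨b, rfl⟩ := hsq
  have hb : IsUnit b := ha b dvd_rfl
  exact hb.mul hb

section Domain

variable {R : Type*} [CommRing R] [IsDomain R]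

open Polynomial in
theorem eq_one_of_isUnit_geom_sum_X_pow {n r : ℕ} (hn : n ≠ 0)
    (h : IsUnit (∑ i ∈ Finset.range r, (X ^ n : R[X]) ^ i)) : r = 1 := by
  have natDegree_X_pow_sub_one (m : ℕ) : (X ^ m - 1 : R[X]).natDegree = m :=
    natDegree_X_pow_sub_C (r := 1)
  have hdeg : n = n * r := by
    have hassoc : Associated (X ^ n - 1 : R[X]) (X ^ (n * r) - 1) := by
      rw [pow_mul, ← geom_sum_mul (X ^ n)]
      exact associated_unit_mul_right _ _ h
    simpa only [natDegree_X_pow_sub_one] using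
      natDegree_eq_of_degree_eq (degree_eq_degree_of_associated hassoc)
  exact (Nat.mul_eq_left hn).mp hdeg.symm

theorem ratFunc_X_pow_ne_one {n : ℕ} (hn : n ≠ 0) : (RatFunc.X : RatFunc R) ^ n ≠ 1 := by
  rw [← RatFunc.algebraMap_X, ← map_pow, Ne, FaithfulSMul.algebraMap_eq_one_iff]
  exact sub_ne_zero.mp (Polynomial.X_pow_sub_C_ne_zero (Nat.pos_of_ne_zero hn) 1)

end Domain

section Field

variable {K : Type*} [Field K]

open Polynomial in
theorem squarefree_geom_sum_X_pow {n r : ℕ} (hnr : ((n * r : ℕ) : K) ≠ 0) :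
    Squarefree (∑ i ∈ Finset.range r, (X ^ n : K[X]) ^ i) := by
  refine (X_pow_sub_one_separable_iff.mpr hnr).squarefree.squarefree_of_dvd ?_
  rw [pow_mul, ← geom_sum_mul]
  exact dvd_mul_right _ _

theorem isSquare_quantumInt_X_sq_iff {r : ℕ} (hr : ((2 * r : ℕ) : K) ≠ 0) :
    IsSquare (quantumInt ((RatFunc.X : RatFunc K) ^ 2) r) ↔ r = 1 := by
  constructor
  · intro h
    have h4r : ((4 * r : ℕ) : K) ≠ 0 := by
      push_cast at hr ⊢
      rw [show (4 * r : K) = 2 * (2 * r) by ring]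
      exact mul_ne_zero (left_ne_zero_of_mul hr) hr
    have hpoly : IsSquare (∑ i ∈ Finset.range r, (Polynomial.X ^ 4 : Polynomial K) ^ i) := by
      rw [← isSquare_algebraMap_iff (L := RatFunc K)]
      simpa only [map_sum, map_pow, RatFunc.algebraMap_X] using
        isSquare_geom_sum_of_isSquare_quantumInt_sq RatFunc.X_ne_zero h
    exact eq_one_of_isUnit_geom_sum_X_pow four_ne_zero
      (isUnit_of_squarefree_of_isSquare (squarefree_geom_sum_X_pow h4r) hpoly)
  · rintro rfl
    exact quantumInt_one (RatFunc.X ^ 2 : RatFunc K) ▸ IsSquare.one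

theorem square_of_quantum_integer_general (r : ℕ) (hr : ((2 * r : ℕ) : K) ≠ 0) :
    (∀ t : RatFunc K,
      t ^ 2 = (RatFunc.X ^ (2 * (r : ℤ)) - RatFunc.X ^ (-(2 * (r : ℤ)))) /
          (RatFunc.X ^ (2 : ℤ) - RatFunc.X ^ (-2 : ℤ)) →
        r = 1 ∧ (t = 1 ∨ t = -1)) ∧
    ((∃ t : RatFunc K,
      t ^ 2 = ∑ k ∈ Finset.range r, RatFunc.X ^ (2 * ((r : ℤ) - 1) - 4 * (k : ℤ))) ↔ r = 1) := by
  rw [← quantumInt_sq_eq_div RatFunc.X_ne_zero (ratFunc_X_pow_ne_one four_ne_zero), ← quantumInt_sq]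
  refine ⟨fun t ht => ?_, ?_⟩
  · obtain rfl : r = 1 := (isSquare_quantumInt_X_sq_iff hr).mp (ht ▸ IsSquare.sq t)
    exact ⟨rfl, sq_eq_one_iff.mp (ht.trans (quantumInt_one _))⟩
  · simp only [← isSquare_quantumInt_X_sq_iff hr, isSquare_iff_exists_sq, eq_comm]

end Field

/-- field-theoretic core of Propositions 3.6 and 5.2:
if `t² = (v^{2r} − v^{−2r})/(v² − v^{−2})` then `r = 1` and `t = ±1`; equivalently,
`v^{2(r−1)} + v^{2(r−3)} + ⋯ + v^{−2(r−1)}` is a square in `F` iff `r = 1`. -/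
theorem square_of_quantum_integer (r : ℕ) (hr : 1 ≤ r) :
    (∀ t : F, t ^ 2 = (v ^ (2 * (r : ℤ)) - v ^ (-(2 * (r : ℤ)))) / (v ^ (2:ℤ) - v ^ (-2:ℤ)) →
      r = 1 ∧ (t = 1 ∨ t = -1)) ∧
    ((∃ t : F, t ^ 2 = ∑ k ∈ Finset.range r, v ^ (2 * ((r : ℤ) - 1) - 4 * (k : ℤ))) ↔ r = 1) :=
  square_of_quantum_integer_general r (by exact_mod_cast (by omega : 2 * r ≠ 0))

end Stmt3
end
end

section
/- In U_v = U_v(q_n), for every 1 ≤ j ≤ n−1 the following identities hold: (i) Ē_j = −v·K_{j+1}K̄_{j+1}E_j + v^{−1}·E_jK_{j+1}K̄_{j+1}; (ii) F̄_j = v·K_{j+1}^{−1}K̄_{j+1}F_j − v^{−1}·F_jK_{j+1}^{−1}K̄_{j+1}; (iii) K̄_j = v·E_jK_{j+1}^{−1}K̄_{j+1}F_jK_{j+1} − v^{−1}·E_jF_jK_{j+1}^{−1}K̄_{j+1}K_{j+1} − v·K_{j+1}^{−1}K̄_{j+1}F_jE_jK_{j+1} + v^{−1}·F_jK_{j+1}^{−1}K̄_{j+1}E_jK_{j+1}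 + K_j^{−1}K̄_{j+1}K_{j+1}. In particular, all the odd generators Ē_j, F̄_j, K̄_j (1 ≤ j ≤ n−1) are expressible in terms of the even generators and K̄_n. (Remark 2.3 of the paper.) -/
open scoped BigOperators

noncomputable section

namespace QueerPaper

/-- The field `F = ℚ(v)` of rational functions. -/
abbrev F : Type := RatFunc ℚ

/-- The element `v` of `F`. -/
noncomputable def v : F := RatFunc.X

lemma v_ne_zero : v ≠ 0 := RatFunc.X_ne_zero

/-- `v` as a unit of `F`. -/
noncomputable def vU : Fˣ := Units.mk0 v v_ne_zero

/-- Generators of the quantum queer superalgebra `U_v(q_n)`: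
`K_i, K_i⁻¹, K̄_i` for `1 ≤ i ≤ n` (here indexed by `Fin n`, 0-based) and
`E_j, Ē_j, F_j, F̄_j` for `1 ≤ j ≤ n−1` (here indexed by `Fin (n-1)`, 0-based). -/
inductive QGen (n : ℕ) : Type
  | K : Fin n → QGen n
  | Kinv : Fin n → QGen n
  | Kb : Fin n → QGen n
  | E : Fin (n - 1) → QGen n
  | Eb : Fin (n - 1) → QGen n
  | Fg : Fin (n - 1) → QGen n
  | Fb : Fin (n - 1) → QGen n

/-- The free `F`-algebra on the generators. -/
abbrev FA (n : ℕ) : Type := FreeAlgebra F (QGen n)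

namespace Pre

variable (n : ℕ)

def K (i : Fin n) : FA n := FreeAlgebra.ι F (QGen.K i)
def Kinv (i : Fin n) : FA n := FreeAlgebra.ι F (QGen.Kinv i)
def Kb (i : Fin n) : FA n := FreeAlgebra.ι F (QGen.Kb i)
def E (j : Fin (n - 1)) : FA n := FreeAlgebra.ι F (QGen.E j)
def Eb (j : Fin (n - 1)) : FA n := FreeAlgebra.ι F (QGen.Eb j)
def Fg (j : Fin (n - 1)) : FA n := FreeAlgebra.ι F (QGen.Fg j)
def Fb (j : Fin (n - 1)) : FA n := FreeAlgebra.ι F (QGen.Fb j)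

end Pre

/-- `Fin (n-1) → Fin n`, preserving the underlying index (paper index `j`). -/
def finL {n : ℕ} (j : Fin (n - 1)) : Fin n := ⟨(j : ℕ), by have := j.2; omega⟩

/-- `Fin (n-1) → Fin n`, shifting the index by one (paper index `j+1`). -/
def finR {n : ℕ} (j : Fin (n - 1)) : Fin n := ⟨(j : ℕ) + 1, by have := j.2; omega⟩

/-- The pairing `⟨i,j⟩ = δ_{i,j} − δ_{i,j+1}` (in the paper's 1-based indexing;
here both indices are 0-based). -/
def pr {n : ℕ} (i : Fin n) (j : Fin (n - 1)) : ℤ :=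
  (if (i : ℕ) = (j : ℕ) then 1 else 0) - (if (i : ℕ) = (j : ℕ) + 1 then 1 else 0)

/-- Kronecker delta with values in `F`. -/
def dlt {m : ℕ} (i j : Fin m) : F := if i = j then 1 else 0

open Pre in
/-- The defining relations (QQ1)–(QQ6) of `U_v(q_n)`. -/
inductive qRel (n : ℕ) : FA n → FA n → Prop
  -- (QQ1)
  | KKinv (i : Fin n) : qRel n (K n i * Kinv n i) 1
  | KinvK (i : Fin n) : qRel n (Kinv n i * K n i) 1
  | KK (i j : Fin n) : qRel n (K n i * K n j) (K n j * K n i)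
  | KKb (i j : Fin n) : qRel n (K n i * Kb n j) (Kb n j * K n i)
  | KbKb (i j : Fin n) :
      qRel n (Kb n i * Kb n j + Kb n j * Kb n i)
        ((dlt i j * (2 / (v ^ 2 - v⁻¹ ^ 2))) • (K n i ^ 2 - Kinv n i ^ 2))
  -- (QQ2)
  | KE (i : Fin n) (j : Fin (n - 1)) :
      qRel n (K n i * E n j) ((v ^ pr i j) • (E n j * K n i))
  | KEb (i : Fin n) (j : Fin (n - 1)) :
      qRel n (K n i * Eb n j) ((v ^ pr i j) • (Eb n j * K n i))
  | KF (i : Fin n) (j : Fin (n - 1)) :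
      qRel n (K n i * Fg n j) ((v ^ (-pr i j)) • (Fg n j * K n i))
  | KFb (i : Fin n) (j : Fin (n - 1)) :
      qRel n (K n i * Fb n j) ((v ^ (-pr i j)) • (Fb n j * K n i))
  -- (QQ3)
  | KbE (j : Fin (n - 1)) :
      qRel n (Kb n (finL j) * E n j - v • (E n j * Kb n (finL j))) (Eb n j * Kinv n (finL j))
  | KbE' (j : Fin (n - 1)) :
      qRel n (v • (Kb n (finR j) * E n j) - E n j * Kb n (finR j)) (-(Kinv n (finR j) * Eb n j))
  | KbF (j : Fin (n - 1)) :
      qRel n (Kb n (finL j) * Fg n j - v • (Fg n j * Kb n (finL j))) (-(Fb n j * K n (finL j)))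
  | KbF' (j : Fin (n - 1)) :
      qRel n (v • (Kb n (finR j) * Fg n j) - Fg n j * Kb n (finR j)) (K n (finR j) * Fb n j)
  | KbEb (j : Fin (n - 1)) :
      qRel n (Kb n (finL j) * Eb n j + v • (Eb n j * Kb n (finL j))) (E n j * Kinv n (finL j))
  | KbEb' (j : Fin (n - 1)) :
      qRel n (v • (Kb n (finR j) * Eb n j) + Eb n j * Kb n (finR j)) (Kinv n (finR j) * E n j)
  | KbFb (j : Fin (n - 1)) :
      qRel n (Kb n (finL j) * Fb n j + v • (Fb n j * Kb n (finL j))) (Fg n j * K n (finL j))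
  | KbFb' (j : Fin (n - 1)) :
      qRel n (v • (Kb n (finR j) * Fb n j) + Fb n j * Kb n (finR j)) (K n (finR j) * Fg n j)
  | KbEcomm (i : Fin n) (j : Fin (n - 1)) (h1 : (i : ℕ) ≠ (j : ℕ)) (h2 : (i : ℕ) ≠ (j : ℕ) + 1) :
      qRel n (Kb n i * E n j - E n j * Kb n i) 0
  | KbFcomm (i : Fin n) (j : Fin (n - 1)) (h1 : (i : ℕ) ≠ (j : ℕ)) (h2 : (i : ℕ) ≠ (j : ℕ) + 1) :
      qRel n (Kb n i * Fg n j - Fg n j * Kb n i) 0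
  | KbEbcomm (i : Fin n) (j : Fin (n - 1)) (h1 : (i : ℕ) ≠ (j : ℕ)) (h2 : (i : ℕ) ≠ (j : ℕ) + 1) :
      qRel n (Kb n i * Eb n j + Eb n j * Kb n i) 0
  | KbFbcomm (i : Fin n) (j : Fin (n - 1)) (h1 : (i : ℕ) ≠ (j : ℕ)) (h2 : (i : ℕ) ≠ (j : ℕ) + 1) :
      qRel n (Kb n i * Fb n j + Fb n j * Kb n i) 0
  -- (QQ4)
  | EF (i j : Fin (n - 1)) :
      qRel n (E n i * Fg n j - Fg n j * E n i)
        ((dlt i j * (1 / (v - v⁻¹))) •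
          (K n (finL i) * Kinv n (finR i) - Kinv n (finL i) * K n (finR i)))
  | EbFb (i j : Fin (n - 1)) :
      qRel n (Eb n i * Fb n j + Fb n j * Eb n i)
        (dlt i j •
          ((1 / (v - v⁻¹)) • (K n (finL i) * K n (finR i) - Kinv n (finL i) * Kinv n (finR i))
            + (v - v⁻¹) • (Kb n (finL i) * Kb n (finR i))))
  | EFb (i j : Fin (n - 1)) :
      qRel n (E n i * Fb n j - Fb n j * E n i)
        (dlt i j • (Kinv n (finR i) * Kb n (finL i) - Kb n (finR i) * Kinv n (finL i)))
  | EbF (i j : Fin (n - 1)) :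
      qRel n (Eb n i * Fg n j - Fg n j * Eb n i)
        (dlt i j • (K n (finR i) * Kb n (finL i) - Kb n (finR i) * K n (finL i)))
  -- (QQ5)
  | EbSq (i : Fin (n - 1)) :
      qRel n (Eb n i ^ 2) ((-((v - v⁻¹) / (v + v⁻¹))) • (E n i ^ 2))
  | FbSq (i : Fin (n - 1)) :
      qRel n (Fb n i ^ 2) (((v - v⁻¹) / (v + v⁻¹)) • (Fg n i ^ 2))
  | EEbcomm (i j : Fin (n - 1)) (h1 : (i : ℕ) ≠ (j : ℕ) + 1) (h2 : (j : ℕ) ≠ (i : ℕ) + 1) :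
      qRel n (E n i * Eb n j - Eb n j * E n i) 0
  | FFbcomm (i j : Fin (n - 1)) (h1 : (i : ℕ) ≠ (j : ℕ) + 1) (h2 : (j : ℕ) ≠ (i : ℕ) + 1) :
      qRel n (Fg n i * Fb n j - Fb n j * Fg n i) 0
  | EEcomm (i j : Fin (n - 1)) (h : (i : ℕ) > (j : ℕ) + 1 ∨ (j : ℕ) > (i : ℕ) + 1) :
      qRel n (E n i * E n j - E n j * E n i) 0
  | FFcomm (i j : Fin (n - 1)) (h : (i : ℕ) > (j : ℕ) + 1 ∨ (j : ℕ) > (i : ℕ) + 1) :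
      qRel n (Fg n i * Fg n j - Fg n j * Fg n i) 0
  | EbEbanti (i j : Fin (n - 1)) (h : (i : ℕ) > (j : ℕ) + 1 ∨ (j : ℕ) > (i : ℕ) + 1) :
      qRel n (Eb n i * Eb n j + Eb n j * Eb n i) 0
  | FbFbanti (i j : Fin (n - 1)) (h : (i : ℕ) > (j : ℕ) + 1 ∨ (j : ℕ) > (i : ℕ) + 1) :
      qRel n (Fb n i * Fb n j + Fb n j * Fb n i) 0
  | EEnext (j : Fin (n - 1)) (h : (j : ℕ) + 1 < n - 1) :
      qRel n (E n j * E n ⟨(j : ℕ) + 1, h⟩ - v • (E n ⟨(j : ℕ) + 1, h⟩ * E n j))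
        (Eb n j * Eb n ⟨(j : ℕ) + 1, h⟩ + v • (Eb n ⟨(j : ℕ) + 1, h⟩ * Eb n j))
  | EEbnext (j : Fin (n - 1)) (h : (j : ℕ) + 1 < n - 1) :
      qRel n (E n j * Eb n ⟨(j : ℕ) + 1, h⟩ - v • (Eb n ⟨(j : ℕ) + 1, h⟩ * E n j))
        (Eb n j * E n ⟨(j : ℕ) + 1, h⟩ - v • (E n ⟨(j : ℕ) + 1, h⟩ * Eb n j))
  | FFnext (j : Fin (n - 1)) (h : (j : ℕ) + 1 < n - 1) :
      qRel n (Fg n j * Fg n ⟨(j : ℕ) + 1, h⟩ - v • (Fg n ⟨(j : ℕ) + 1, h⟩ * Fg n j))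
        (-(Fb n j * Fb n ⟨(j : ℕ) + 1, h⟩ + v • (Fb n ⟨(j : ℕ) + 1, h⟩ * Fb n j)))
  | FFbnext (j : Fin (n - 1)) (h : (j : ℕ) + 1 < n - 1) :
      qRel n (Fg n j * Fb n ⟨(j : ℕ) + 1, h⟩ - v • (Fb n ⟨(j : ℕ) + 1, h⟩ * Fg n j))
        (Fb n j * Fg n ⟨(j : ℕ) + 1, h⟩ - v • (Fg n ⟨(j : ℕ) + 1, h⟩ * Fb n j))
  -- (QQ6)
  | serreE (i j : Fin (n - 1)) (h : (i : ℕ) = (j : ℕ) + 1 ∨ (j : ℕ) = (i : ℕ) + 1) :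
      qRel n (E n i ^ 2 * E n j - (v + v⁻¹) • (E n i * E n j * E n i) + E n j * E n i ^ 2) 0
  | serreF (i j : Fin (n - 1)) (h : (i : ℕ) = (j : ℕ) + 1 ∨ (j : ℕ) = (i : ℕ) + 1) :
      qRel n (Fg n i ^ 2 * Fg n j - (v + v⁻¹) • (Fg n i * Fg n j * Fg n i) + Fg n j * Fg n i ^ 2) 0
  | serreEEb (i j : Fin (n - 1)) (h : (i : ℕ) = (j : ℕ) + 1 ∨ (j : ℕ) = (i : ℕ) + 1) :
      qRel n (E n i ^ 2 * Eb n j - (v + v⁻¹) • (E n i * Eb n j * E n i) + Eb n j * E n i ^ 2) 0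
  | serreFFb (i j : Fin (n - 1)) (h : (i : ℕ) = (j : ℕ) + 1 ∨ (j : ℕ) = (i : ℕ) + 1) :
      qRel n (Fg n i ^ 2 * Fb n j - (v + v⁻¹) • (Fg n i * Fb n j * Fg n i) + Fb n j * Fg n i ^ 2) 0

/-- The quantum queer superalgebra `U_v(q_n)`, as the quotient of the free algebra
by the two-sided ideal generated by the relations (QQ1)–(QQ6). -/
abbrev Uq (n : ℕ) : Type := RingQuot (qRel n)

/-- The quotient map. -/
noncomputable def mk (n : ℕ) : FA n →ₐ[F] Uq n := RingQuot.mkAlgHom F (qRel n)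

noncomputable def uK (n : ℕ) (i : Fin n) : Uq n := mk n (Pre.K n i)
noncomputable def uKinv (n : ℕ) (i : Fin n) : Uq n := mk n (Pre.Kinv n i)
noncomputable def uKb (n : ℕ) (i : Fin n) : Uq n := mk n (Pre.Kb n i)
noncomputable def uE (n : ℕ) (j : Fin (n - 1)) : Uq n := mk n (Pre.E n j)
noncomputable def uEb (n : ℕ) (j : Fin (n - 1)) : Uq n := mk n (Pre.Eb n j)
noncomputable def uF (n : ℕ) (j : Fin (n - 1)) : Uq n := mk n (Pre.Fg n j)
noncomputable def uFb (n : ℕ) (j : Fin (n - 1)) : Uq n := mk n (Pre.Fb n j)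

section Modules

variable (n : ℕ) (M : Type) [AddCommGroup M] [Module F M]
  [Module (Uq n) M] [IsScalarTower F (Uq n) M]

lemma uq_smul_f_smul (u : Uq n) (c : F) (m : M) : u • (c • m) = c • (u • m) := by
  rw [← algebraMap_smul (Uq n) c m, ← mul_smul, ← Algebra.commutes, mul_smul,
    algebraMap_smul]

/-- The weight space `M_ω = {m ∈ M | K_i m = ω_i m for all i}`. -/
noncomputable def weightSpace (ω : Fin n → Fˣ) : Submodule F M where
  carrier := {m | ∀ i : Fin n, uK n i • m = (ω i : F) • m}
  add_mem' := by
    intro a b ha hb i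
    rw [smul_add, ha i, hb i, smul_add]
  zero_mem' := by
    intro i; rw [smul_zero, smul_zero]
  smul_mem' := by
    intro c m hm i
    rw [uq_smul_f_smul, hm i, smul_comm]

/-- `ω` is a weight of `M` if the weight space `M_ω` is nonzero. -/
def IsWeight (ω : Fin n → Fˣ) : Prop := weightSpace n M ω ≠ ⊥

/-- `M` is a weight module if it is the internal direct sum of its weight spaces. -/
def IsWeightModule : Prop :=
  iSupIndep (fun ω : {ω : Fin n → Fˣ // IsWeight n M ω} => weightSpace n M ω.1) ∧
    (⨆ ω : {ω : Fin n → Fˣ // IsWeight n M ω}, weightSpace n M ω.1) = ⊤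

/-- `m` is a highest weight vector of weight `ω`. -/
def IsHWVector (ω : Fin n → Fˣ) (m : M) : Prop :=
  m ≠ 0 ∧ (∀ i : Fin n, uK n i • m = (ω i : F) • m) ∧
    ∀ j : Fin (n - 1), uE n j • m = 0 ∧ uEb n j • m = 0

/-- `M` is a highest weight module of highest weight `ω`. -/
def IsHWModule (ω : Fin n → Fˣ) : Prop :=
  ∃ m : M, IsHWVector n M ω m ∧ Submodule.span (Uq n) {m} = ⊤

end Modules

/-!
For `X = E, F`, multiplying the (QQ3) relation `v K̄_{j+1} X_j − X_j K̄_{j+1} = ∓ K_{j+1}^{∓1} X̄_j`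
on the left by the inverse power of `K_{j+1}` isolates `X̄_j`; moving that power past `X_j` costs
the factor `v⁻¹` in both cases, `F_j` having the opposite weight to `E_j`. The (QQ4) relation
`[E_j, F̄_j] = K_{j+1}⁻¹ K̄_j − K̄_{j+1} K_j⁻¹` can then be solved for `K̄_j`, and `F̄_j`
eliminated.
-/

section SkewCommutation

lemma semiconjBy_units_inv_smul {G A : Type*} [GroupWithZero G] [Monoid A] [MulAction G A]
    [IsScalarTower G A A] [SMulCommClass G A A] {q : G} (hq : q ≠ 0) {a : Aˣ} {x : A}
    (h : SemiconjBy (a : A) x (q • x)) : SemiconjBy (↑a⁻¹ : A) x (q⁻¹ • x) := by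
  have h' : SemiconjBy (↑a⁻¹ : A) (q • x) x := h.units_inv_symm_left
  calc ↑a⁻¹ * x = q⁻¹ • (↑a⁻¹ * (q • x)) := by rw [mul_smul_comm, inv_smul_smul₀ hq]
    _ = q⁻¹ • x * ↑a⁻¹ := by rw [h'.eq, smul_mul_assoc]

lemma eq_smul_sub_smul_of_smul_mul_sub_mul_eq {R A : Type*} [Ring A] [SMul R A]
    [IsScalarTower R A A] [SMulCommClass R A A] {q r : R} {a : Aˣ} {b x y : A}
    (ha : SemiconjBy (a : A) x (r • x)) (h : q • (b * x) - x * b = ↑a⁻¹ * y) :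
    y = q • (a * b * x) - r • (x * (a * b)) :=
  calc y = a * (q • (b * x) - x * b) := by rw [h, Units.mul_inv_cancel_left]
    _ = q • (a * b * x) - r • x * a * b := by
      rw [mul_sub, mul_smul_comm, ← mul_assoc ↑a b x, ← mul_assoc ↑a x b, ha.eq]
    _ = q • (a * b * x) - r • (x * (a * b)) := by
      rw [smul_mul_assoc, smul_mul_assoc, mul_assoc x]

end SkewCommutation

section Relations

variable {n : ℕ}

lemma mk_eq_mk {a b : FA n} (h : qRel n a b) : mk n a = mk n b :=
  RingQuot.mkAlgHom_rel F h

lemma uK_mul_uKinv (i : Fin n) : uK n i * uKinv n i = 1 := by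
  simpa [uK, uKinv] using mk_eq_mk (.KKinv i)

lemma uKinv_mul_uK (i : Fin n) : uKinv n i * uK n i = 1 := by
  simpa [uK, uKinv] using mk_eq_mk (.KinvK i)

/-- The generator `K_i` as a unit of `U_v(q_n)`, with inverse the generator `K_i⁻¹`; it gives
access to the library lemmas on inverses of (semi)commuting units. -/
def uKUnit (i : Fin n) : (Uq n)ˣ := ⟨uK n i, uKinv n i, uK_mul_uKinv i, uKinv_mul_uK i⟩

lemma commute_uK_uKb (i j : Fin n) : Commute (uK n i) (uKb n j) := by
  simpa [uK, uKb, commute_iff_eq] using mk_eq_mk (.KKb i j)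

lemma commute_uKinv_uKb (i j : Fin n) : Commute (uKinv n i) (uKb n j) :=
  Commute.units_inv_left (u := uKUnit i) (commute_uK_uKb i j)

lemma semiconjBy_uK_uE (i : Fin n) (j : Fin (n - 1)) :
    SemiconjBy (uK n i) (uE n j) (v ^ pr i j • uE n j) := by
  simpa [uK, uE, SemiconjBy] using mk_eq_mk (.KE i j)

lemma semiconjBy_uK_uF (i : Fin n) (j : Fin (n - 1)) :
    SemiconjBy (uK n i) (uF n j) (v ^ (-pr i j) • uF n j) := by
  simpa [uK, uF, SemiconjBy] using mk_eq_mk (.KF i j)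

lemma semiconjBy_uKinv_uF (i : Fin n) (j : Fin (n - 1)) :
    SemiconjBy (uKinv n i) (uF n j) (v ^ pr i j • uF n j) := by
  have h := semiconjBy_units_inv_smul (a := uKUnit i) (zpow_ne_zero _ v_ne_zero)
    (semiconjBy_uK_uF i j)
  rwa [← zpow_neg, neg_neg] at h

lemma smul_uKb_mul_uE_sub (j : Fin (n - 1)) :
    v • (uKb n (finR j) * uE n j) - uE n j * uKb n (finR j) = -(uKinv n (finR j) * uEb n j) := by
  simpa [uKb, uE, uKinv, uEb] using mk_eq_mk (.KbE' j)

lemma smul_uKb_mul_uF_sub (j : Fin (n - 1)) :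
    v • (uKb n (finR j) * uF n j) - uF n j * uKb n (finR j) = uK n (finR j) * uFb n j := by
  simpa [uKb, uF, uK, uFb] using mk_eq_mk (.KbF' j)

lemma uE_mul_uFb_sub_uFb_mul_uE (j : Fin (n - 1)) :
    uE n j * uFb n j - uFb n j * uE n j =
      uKinv n (finR j) * uKb n (finL j) - uKb n (finR j) * uKinv n (finL j) := by
  simpa [dlt, uE, uFb, uKinv, uKb] using mk_eq_mk (.EFb j j)

end Relations

section OddGenerators

variable {n : ℕ} (j : Fin (n - 1))

lemma pr_finR_self : pr (finR j) j = -1 := by simp [pr, finR]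

lemma uEb_eq :
    uEb n j = -(v • (uK n (finR j) * uKb n (finR j) * uE n j))
        + v⁻¹ • (uE n j * (uK n (finR j) * uKb n (finR j))) := by
  have hKE : SemiconjBy (uK n (finR j)) (uE n j) (v⁻¹ • uE n j) := by
    simpa [pr_finR_self] using semiconjBy_uK_uE (finR j) j
  have hneg : -uEb n j = v • (uK n (finR j) * uKb n (finR j) * uE n j)
      - v⁻¹ • (uE n j * (uK n (finR j) * uKb n (finR j))) :=
    eq_smul_sub_smul_of_smul_mul_sub_mul_eq (a := uKUnit (finR j)) hKE
      ((smul_uKb_mul_uE_sub j).trans (mul_neg (uKinv n (finR j)) (uEb n j)).symm)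
  rw [← neg_neg (uEb n j), hneg, neg_sub', sub_neg_eq_add]

lemma uFb_eq :
    uFb n j = v • (uKinv n (finR j) * uKb n (finR j) * uF n j)
        - v⁻¹ • (uF n j * (uKinv n (finR j) * uKb n (finR j))) := by
  have hKF : SemiconjBy (uKinv n (finR j)) (uF n j) (v⁻¹ • uF n j) := by
    simpa [pr_finR_self] using semiconjBy_uKinv_uF (finR j) j
  exact eq_smul_sub_smul_of_smul_mul_sub_mul_eq (a := (uKUnit (finR j))⁻¹) hKF
    (smul_uKb_mul_uF_sub j)

lemma uKb_finL_eq_commutator_add_mul :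
    uKb n (finL j) =
      (uE n j * uFb n j - uFb n j * uE n j + uKinv n (finL j) * uKb n (finR j))
        * uK n (finR j) := by
  rw [uE_mul_uFb_sub_uFb_mul_uE, (commute_uKinv_uKb (finL j) (finR j)).eq, sub_add_cancel,
    (commute_uKinv_uKb (finR j) (finL j)).eq, mul_assoc, uKinv_mul_uK, mul_one]

lemma uKb_finL_eq :
    uKb n (finL j) =
      v • (uE n j * uKinv n (finR j) * uKb n (finR j) * uF n j * uK n (finR j))
        - v⁻¹ • (uE n j * uF n j * uKinv n (finR j) * uKb n (finR j) * uK n (finR j))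
        - v • (uKinv n (finR j) * uKb n (finR j) * uF n j * uE n j * uK n (finR j))
        + v⁻¹ • (uF n j * uKinv n (finR j) * uKb n (finR j) * uE n j * uK n (finR j))
        + uKinv n (finL j) * uKb n (finR j) * uK n (finR j) := by
  rw [uKb_finL_eq_commutator_add_mul, uFb_eq]
  simp only [mul_sub, sub_mul, add_mul, mul_smul_comm, smul_mul_assoc, mul_assoc]
  abel

end OddGenerators

/-- Remark 2.3: the odd generators `Ē_j`, `F̄_j`, `K̄_j` are expressible
in terms of the even generators and `K̄_{j+1}`. -/
theorem odd_generators_from_even (n : ℕ) (hn : 2 ≤ n) (j : Fin (n - 1)) :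
    uEb n j = -(v • (uK n (finR j) * uKb n (finR j) * uE n j))
        + v⁻¹ • (uE n j * (uK n (finR j) * uKb n (finR j))) ∧
    uFb n j = v • (uKinv n (finR j) * uKb n (finR j) * uF n j)
        - v⁻¹ • (uF n j * (uKinv n (finR j) * uKb n (finR j))) ∧
    uKb n (finL j) =
      v • (uE n j * uKinv n (finR j) * uKb n (finR j) * uF n j * uK n (finR j))
        - v⁻¹ • (uE n j * uF n j * uKinv n (finR j) * uKb n (finR j) * uK n (finR j))
        - v • (uKinv n (finR j) * uKb n (finR j) * uF n j * uE n j * uK n (finR j))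
        + v⁻¹ • (uF n j * uKinv n (finR j) * uKb n (finR j) * uE n j * uK n (finR j))
        + uKinv n (finL j) * uKb n (finR j) * uK n (finR j) :=
  ⟨uEb_eq j, uFb_eq j, uKb_finL_eq j⟩

end QueerPaper
end
end

section
/- Let M be a U_v-module, let 1 ≤ i ≤ n−2, and let m ∈ M satisfy F_{i+1}·m = 0. Then for every integer k ≥ 1 there exists a scalar t_k ∈ F such that F_i·F_{i+1}·F_i^k·m = t_k·F_{i+1}·F_i^{k+1}·m. (Proposition 4.7 of the paper; there it is stated for a weight vector m of weight λ with λ_{i+1} = 0 in the twisted queer q-Schur superalgebra, in which case F_{i+1}·m = 0 holds, and the proof uses only this relation together with the quantum Serre relations (QQ6).) -/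
open scoped BigOperators

noncomputable section

namespace QueerPaper

/-!
Write `[k] = (q ^ k - q⁻¹ ^ k) / (q - q⁻¹)`, and suppose that `b • m = 0` and that
`a ^ 2 * b - (q + q⁻¹) • (a * b * a) + b * a ^ 2 = 0`. Then
`[k + 1] • a • b • a ^ k • m = [k] • b • a ^ (k + 1) • m` for all `k`. The induction step applies
`a` to this identity and eliminates `a ^ 2 • b • a ^ k • m` by the Serre relation; what remains is
the recursion `[k + 2] = (q + q⁻¹) [k + 1] - [k]`. As `[k + 1]` is a polynomial in `δ = q + q⁻¹`,
namely the rescaled Chebyshev polynomial `S k` evaluated at `δ`, the argument works over any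
commutative ring. Since `v` is transcendental, `[k + 1] ≠ 0` at `q = v`, and `t_k = [k] / [k + 1]`.
-/

open Polynomial

section Chebyshev

lemma sub_mul_eval_chebyshev_S {R : Type*} [CommRing R] {x y : R} (hxy : x * y = 1) (k : ℕ) :
    (x - y) * (Chebyshev.S R k).eval (x + y) = x ^ (k + 1) - y ^ (k + 1) := by
  induction k using Nat.twoStepInduction with
  | zero => simp
  | one =>
    rw [Nat.cast_one, Chebyshev.S_one, eval_X]
    ring
  | more k ih₀ ih₁ =>
    push_cast at ih₁ ⊢
    rw [Chebyshev.S_add_two, eval_sub, eval_mul, eval_X]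
    linear_combination (x + y) * ih₁ - ih₀ + (x ^ (k + 1) - y ^ (k + 1)) * hxy

lemma eval_chebyshev_S_add_inv_ne_zero {K : Type*} [Field K] {q : K} (hq : q ≠ 0) {k : ℕ}
    (hqk : q ^ (2 * (k + 1)) ≠ 1) : (Chebyshev.S K k).eval (q + q⁻¹) ≠ 0 := by
  intro hS
  have hpow : q ^ (k + 1) = q⁻¹ ^ (k + 1) := by
    rw [← sub_eq_zero, ← sub_mul_eval_chebyshev_S (mul_inv_cancel₀ hq), hS, mul_zero]
  apply hqk
  calc q ^ (2 * (k + 1)) = q ^ (k + 1) * q ^ (k + 1) := by rw [two_mul, pow_add]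
    _ = q ^ (k + 1) * q⁻¹ ^ (k + 1) := by rw [← hpow]
    _ = 1 := by rw [← mul_pow, mul_inv_cancel₀ hq, one_pow]

end Chebyshev

section Serre

variable {R A M : Type*} [CommRing R] [Ring A] [Algebra R A] [AddCommGroup M] [Module R M]
  [Module A M] [IsScalarTower R A M] {δ : R} {a b : A}

lemma smul_smul_smul_eq_of_serre (hserre : a ^ 2 * b - δ • (a * b * a) + b * a ^ 2 = 0) (m : M) :
    a • a • b • m = δ • a • b • a • m - b • a • a • m := by
  have h := congrArg (· • m) hserre
  simp only [add_smul, sub_smul, zero_smul, smul_assoc, mul_smul, pow_two] at h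
  rw [← sub_eq_zero, ← h]
  abel

lemma eval_chebyshev_S_smul_of_serre (hserre : a ^ 2 * b - δ • (a * b * a) + b * a ^ 2 = 0)
    {m : M} (hm : b • m = 0) (k : ℕ) :
    (Chebyshev.S R k).eval δ • a • b • a ^ k • m =
      (Chebyshev.S R (k - 1)).eval δ • b • a ^ (k + 1) • m := by
  induction k with
  | zero => simp [hm]
  | succ k ih =>
    set w := a ^ k • m
    have hw₁ : a ^ (k + 1) • m = a • w := by rw [pow_succ', mul_smul]
    have hw₂ : a ^ (k + 1 + 1) • m = a • a • w := by rw [pow_succ', mul_smul, hw₁]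
    have ih_smul : (Chebyshev.S R k).eval δ • a • a • b • w =
        (Chebyshev.S R (k - 1)).eval δ • a • b • a • w := by
      simpa only [smul_algebra_smul_comm, hw₁] using congrArg (a • ·) ih
    rw [hw₁, hw₂, Nat.cast_succ, add_sub_cancel_right, Chebyshev.S_add_one, eval_sub, eval_mul,
      eval_X]
    calc (δ * (Chebyshev.S R k).eval δ - (Chebyshev.S R (k - 1)).eval δ) • a • b • a • w
      _ = (Chebyshev.S R k).eval δ • (δ • a • b • a • w - a • a • b • w) := by
        rw [sub_smul, ← ih_smul, mul_comm, mul_smul, smul_sub]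
      _ = (Chebyshev.S R k).eval δ • b • a • a • w := by
        rw [smul_smul_smul_eq_of_serre hserre, sub_sub_cancel]

theorem f_order_general (hserre : a ^ 2 * b - δ • (a * b * a) + b * a ^ 2 = 0) {m : M}
    (hm : b • m = 0) {k : ℕ} (hk : IsUnit ((Chebyshev.S R k).eval δ)) :
    ∃ t : R, a • b • a ^ k • m = t • b • a ^ (k + 1) • m := by
  obtain ⟨u, hu⟩ := hk
  refine ⟨↑u⁻¹ * (Chebyshev.S R (k - 1)).eval δ, ?_⟩
  rw [mul_smul, ← eval_chebyshev_S_smul_of_serre hserre hm, ← hu, ← mul_smul (↑u⁻¹ : R),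
    Units.inv_mul, one_smul]

end Serre

lemma ratFunc_X_pow_ne_one {K : Type*} [Field K] {k : ℕ} (hk : 0 < k) :
    (RatFunc.X : RatFunc K) ^ k ≠ 1 :=
  fun h ↦ RatFunc.transcendental_X.pow hk (h ▸ isAlgebraic_one (R := K))

lemma uF_serre {n : ℕ} {i j : Fin (n - 1)} (hij : (i : ℕ) = j + 1 ∨ (j : ℕ) = i + 1) :
    uF n i ^ 2 * uF n j - (v + v⁻¹) • (uF n i * uF n j * uF n i) + uF n j * uF n i ^ 2 = 0 := by
  simpa only [uF, mk, map_add, map_sub, map_mul, map_pow, map_smul, map_zero] using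
    RingQuot.mkAlgHom_rel F (qRel.serreF i j hij)

/-- Proposition 4.7: if `F_{i+1}·m = 0` then for every `k ≥ 1` there
is a scalar `t_k` with `F_i F_{i+1} F_i^k m = t_k F_{i+1} F_i^{k+1} m`. -/
theorem f_order (n : ℕ) (hn : 2 ≤ n)
    (M : Type) [AddCommGroup M] [Module F M] [Module (Uq n) M] [IsScalarTower F (Uq n) M]
    (j : Fin (n - 1)) (h : (j : ℕ) + 1 < n - 1) (m : M)
    (hm : uF n ⟨(j : ℕ) + 1, h⟩ • m = 0) (k : ℕ) (hk : 1 ≤ k) :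
    ∃ t : F,
      uF n j • (uF n ⟨(j : ℕ) + 1, h⟩ • ((uF n j ^ k) • m))
        = t • (uF n ⟨(j : ℕ) + 1, h⟩ • ((uF n j ^ (k + 1)) • m)) := by
  have hS : (Chebyshev.S F k).eval (v + v⁻¹) ≠ 0 :=
    eval_chebyshev_S_add_inv_ne_zero v_ne_zero (ratFunc_X_pow_ne_one (by positivity))
  exact f_order_general (uF_serre (Or.inr rfl)) hm hS.isUnit

end QueerPaper
end
end
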